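/- Let 0 < p < 1, let r ≥ 1, and let H be a bipartite graph with left vertex set U of size k, right vertex set V of size m, and 2r-fold p-balancedness Δ. Let (L, R) be a biclique of H and let e = C(|L|, r) be the number of r-element subsets of L. Then ((1−p)/p)^r · e² · |R| ≤ m · max{p/(1−p), (1−p)/p}^r · e + Δ · e². -/

import Mathlib

/-- `(L, R)` is a biclique of the bipartite graph `H`. -/
def IsBiclique {k m : ℕ} (H : Fin k → Fin m → Bool) (L : Finset (Fin k))
    (R : Finset (Fin m)) : Prop :=
  ∀ u ∈ L, ∀ v ∈ R, H u v = true

/-- The `p`-biased character entry: `√((1−p)/p)` if `{i,j}` is an edge of `H` and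
`−√(p/(1−p))` otherwise. -/
noncomputable def pChar {k m : ℕ} (p : ℝ) (H : Fin k → Fin m → Bool)
    (i : Fin k) (j : Fin m) : ℝ :=
  if H i j then Real.sqrt ((1 - p) / p) else -Real.sqrt (p / (1 - p))

/-- `H` has `2r`-fold `p`-balancedness `Δ`: for all `S, T ⊆ U` with `|S|, |T| ≤ r` and
`S ≠ T`, `|∑_{j} u_{p,S}(j)·u_{p,T}(j)| ≤ Δ`, where `u_{p,S}(j) = ∏_{i∈S} H_p(i,j)`. -/
def PFoldBalanced {k m : ℕ} (H : Fin k → Fin m → Bool) (p : ℝ) (r : ℕ) (Δ : ℝ) : Prop :=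
  ∀ S T : Finset (Fin k), S.card ≤ r → T.card ≤ r → S ≠ T →
    |∑ j : Fin m, (∏ i ∈ S, pChar p H i j) * (∏ i ∈ T, pChar p H i j)| ≤ Δ

theorem pChar_sq_le {k m : ℕ} (p : ℝ) (hp0 : 0 < p) (hp1 : p < 1)
    (H : Fin k → Fin m → Bool) (i : Fin k) (j : Fin m) :
    pChar p H i j * pChar p H i j ≤ max (p / (1 - p)) ((1 - p) / p) := by
  have h1 : 0 < 1 - p := by linarith
  unfold pChar
  split_ifs
  · rw [Real.mul_self_sqrt (by positivity)]
    exact le_max_right _ _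
  · rw [neg_mul_neg, Real.mul_self_sqrt (by positivity)]
    exact le_max_left _ _

/-- If `H` (left size `k`, right size `m`) has `2r`-fold `p`-balancedness `Δ` and
`(L, R)` is a biclique of `H`, then with `e = C(|L|, r)` one has
`((1−p)/p)^r·e²·|R| ≤ m·max{p/(1−p), (1−p)/p}^r·e + Δ·e²`. -/
theorem stmt_15 {k m r : ℕ} (hr : 1 ≤ r) (p : ℝ) (hp0 : 0 < p) (hp1 : p < 1)
    (H : Fin k → Fin m → Bool) (Δ : ℝ) (hbal : PFoldBalanced H p r Δ)
    (L : Finset (Fin k)) (R : Finset (Fin m)) (hbic : IsBiclique H L R) :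
    ((1 - p) / p) ^ r * (L.card.choose r : ℝ) ^ 2 * R.card
      ≤ (m : ℝ) * (max (p / (1 - p)) ((1 - p) / p)) ^ r * (L.card.choose r)
        + Δ * (L.card.choose r : ℝ) ^ 2 := by
  have h1 : 0 < 1 - p := by linarith
  rcases Nat.eq_zero_or_pos (L.card.choose r) with he | he
  · simp [he]
  have hrL : r ≤ L.card := by
    by_contra h
    rw [Nat.choose_eq_zero_of_lt (by omega)] at he
    omega
  have hΔ : 0 ≤ Δ := by
    obtain ⟨i, hi⟩ := Finset.card_pos.mp (by omega : 0 < L.card)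
    exact (abs_nonneg _).trans
      (hbal ∅ {i} (by simp) (by simpa using hr) (Finset.singleton_ne_empty i).symm)
  set M := max (p / (1 - p)) ((1 - p) / p) with hM
  set P := L.powersetCard r with hP
  have hPc : P.card = L.card.choose r := Finset.card_powersetCard r L
  rw [← hPc]
  set u : Finset (Fin k) → Fin m → ℝ := fun S j => ∏ i ∈ S, pChar p H i j with hu
  have hlow : ((1 - p) / p) ^ r * (P.card : ℝ) ^ 2 * R.card ≤ ∑ j, (∑ S ∈ P, u S j) ^ 2 := by
    have hR : ∀ j ∈ R, (∑ S ∈ P, u S j) ^ 2 = ((1 - p) / p) ^ r * (P.card : ℝ) ^ 2 := by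
      intro j hj
      have hS : ∀ S ∈ P, u S j = Real.sqrt ((1 - p) / p) ^ r := by
        intro S hS
        rw [hP, Finset.mem_powersetCard] at hS
        rw [← hS.2]
        refine Finset.prod_eq_pow_card ?_
        intro i hi
        simp [pChar, hbic i (hS.1 hi) j hj]
      rw [Finset.sum_congr rfl hS, Finset.sum_const, nsmul_eq_mul, mul_pow, ← pow_mul,
        mul_comm r 2, pow_mul, Real.sq_sqrt (by positivity), mul_comm]
    calc _ = ∑ j ∈ R, (∑ S ∈ P, u S j) ^ 2 := by
          rw [Finset.sum_congr rfl hR, Finset.sum_const, nsmul_eq_mul, mul_comm]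
      _ ≤ _ := Finset.sum_le_sum_of_subset_of_nonneg (Finset.subset_univ _)
          (fun _ _ _ => sq_nonneg _)
  refine hlow.trans ?_
  have hexp : ∑ j, (∑ S ∈ P, u S j) ^ 2 = ∑ S ∈ P, ∑ T ∈ P, ∑ j, u S j * u T j := by
    simp_rw [sq, Finset.sum_mul_sum]
    rw [Finset.sum_comm]
    refine Finset.sum_congr rfl fun S _ => ?_
    rw [Finset.sum_comm]
  rw [hexp]
  have hbd : ∀ S ∈ P, ∀ T ∈ P,
      ∑ j, u S j * u T j ≤ (if S = T then (m : ℝ) * M ^ r else 0) + Δ := by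
    intro S hS T hT
    rw [hP, Finset.mem_powersetCard] at hS hT
    split_ifs with hST
    · subst hST
      have : ∑ j, u S j * u S j ≤ ∑ _j : Fin m, M ^ r := by
        refine Finset.sum_le_sum fun j _ => ?_
        simp only [hu]
        rw [← Finset.prod_mul_distrib, ← hS.2, ← Finset.prod_const]
        exact Finset.prod_le_prod (fun i _ => mul_self_nonneg _)
          (fun i _ => pChar_sq_le p hp0 hp1 H i j)
      simp at this
      linarith
    · rw [zero_add]
      exact (le_abs_self _).trans (hbal S T hS.2.le hT.2.le hST)
  calc _ ≤ ∑ S ∈ P, ∑ T ∈ P, ((if S = T then (m : ℝ) * M ^ r else 0) + Δ) :=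
        Finset.sum_le_sum fun S hS => Finset.sum_le_sum fun T hT => hbd S hS T hT
    _ = ∑ S ∈ P, ((m : ℝ) * M ^ r + P.card * Δ) := by
        refine Finset.sum_congr rfl fun S hS => ?_
        rw [Finset.sum_add_distrib, Finset.sum_ite_eq, if_pos hS, Finset.sum_const, nsmul_eq_mul]
    _ = _ := by
        rw [Finset.sum_const, nsmul_eq_mul]; ring
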